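/- In the exterior algebra Λ described in the context, the following identities hold: (1) I₂₁ ∧ I₂₄ = I₁ ∧ I₃₂; (2) I₂₂ ∧ I₂₃ = I₁ ∧ I₃₁; (3) with I₂ := I₂₁ + I₂₂ + I₂₃ + I₂₄ and I₃ := I₃₁ + I₃₂, one has I₂ ∧ I₂ = 2·(I₁ ∧ I₃); and (4) I₁ ∧ I₁ = 0 and I₁ ∧ I₂ⱼ = 0 for each j ∈ {1,2,3,4} (writing I₂₁, I₂₂, I₂₃, I₂₄ for the I₂ⱼ). -/

import Mathlib

set_option synthInstance.maxHeartbeats 1000000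
set_option maxHeartbeats 1000000

noncomputable section

/-- The base commutative ring: polynomials over `ℂ` in the `2m` variables
`v₁, …, v_m` (encoded `(i, 0)`) and `w₁, …, w_m` (encoded `(i, 1)`, playing the
role of the conjugates `v̄_i`). -/
abbrev PolyR (m : ℕ) := MvPolynomial (Fin m × Fin 2) ℂ

/-- The free module with basis `a_i, b_i, c_i, d_i` (encoded by `Fin m × Fin 4`,
playing the roles of `dz_i, dz̄_i, dv_i, dv̄_i`). -/
abbrev ModM (m : ℕ) := Fin m × Fin 4 → PolyR m

/-- The exterior algebra `Λ` of the free module `ModM m` over `PolyR m`. -/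
abbrev Lam (m : ℕ) := ExteriorAlgebra (PolyR m) (ModM m)

/-- The basis generators: `eGen m 0 i = a_i`, `eGen m 1 i = b_i`,
`eGen m 2 i = c_i`, `eGen m 3 i = d_i`. -/
def eGen (m : ℕ) (t : Fin 4) (i : Fin m) : Lam m :=
  ExteriorAlgebra.ι (PolyR m) (Pi.single (i, t) 1)

/-- The scalar `v_i`. -/
def vS (m : ℕ) (i : Fin m) : PolyR m := MvPolynomial.X (i, 0)

/-- The scalar `w_i` (playing the role of `v̄_i`). -/
def wS (m : ℕ) (i : Fin m) : PolyR m := MvPolynomial.X (i, 1)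

/-- `I₁ = (Σ w_i a_i) ∧ (Σ v_j b_j) ∧ (Σ w_k c_k) ∧ (Σ v_l d_l)`. -/
def I1 (m : ℕ) : Lam m :=
  (∑ i, wS m i • eGen m 0 i) * (∑ j, vS m j • eGen m 1 j)
    * (∑ k, wS m k • eGen m 2 k) * (∑ l, vS m l • eGen m 3 l)

/-- `I₂₁ = (Σ a_i ∧ b_i) ∧ (Σ w_k c_k) ∧ (Σ v_l d_l)`. -/
def I21 (m : ℕ) : Lam m :=
  (∑ i, eGen m 0 i * eGen m 1 i) * (∑ k, wS m k • eGen m 2 k) * (∑ l, vS m l • eGen m 3 l)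

/-- `I₂₂ = (Σ v_j b_j) ∧ (Σ w_k c_k) ∧ (Σ a_i ∧ d_i)`. -/
def I22 (m : ℕ) : Lam m :=
  (∑ j, vS m j • eGen m 1 j) * (∑ k, wS m k • eGen m 2 k) * (∑ i, eGen m 0 i * eGen m 3 i)

/-- `I₂₃ = (Σ w_i a_i) ∧ (Σ b_j ∧ c_j) ∧ (Σ v_l d_l)`. -/
def I23 (m : ℕ) : Lam m :=
  (∑ i, wS m i • eGen m 0 i) * (∑ j, eGen m 1 j * eGen m 2 j) * (∑ l, vS m l • eGen m 3 l)

/-- `I₂₄ = (Σ w_i a_i) ∧ (Σ v_j b_j) ∧ (Σ c_k ∧ d_k)`. -/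
def I24 (m : ℕ) : Lam m :=
  (∑ i, wS m i • eGen m 0 i) * (∑ j, vS m j • eGen m 1 j) * (∑ k, eGen m 2 k * eGen m 3 k)

/-- `I₃₁ = (Σ b_i ∧ c_i) ∧ (Σ a_j ∧ d_j)`. -/
def I31 (m : ℕ) : Lam m :=
  (∑ i, eGen m 1 i * eGen m 2 i) * (∑ j, eGen m 0 j * eGen m 3 j)

/-- `I₃₂ = (Σ a_i ∧ b_i) ∧ (Σ c_k ∧ d_k)`. -/
def I32 (m : ℕ) : Lam m :=
  (∑ i, eGen m 0 i * eGen m 1 i) * (∑ k, eGen m 2 k * eGen m 3 k)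

/-- `I₂ = I₂₁ + I₂₂ + I₂₃ + I₂₄`. -/
def I2 (m : ℕ) : Lam m := I21 m + I22 m + I23 m + I24 m

/-- `I₃ = I₃₁ + I₃₂`. -/
def I3 (m : ℕ) : Lam m := I31 m + I32 m

/-!
A bivector `x ∧ y` commutes with every vector, hence with all of `Λ`. So, with `A, B, C, D` the four
linear factors of `I₁`, each `I₂ⱼ` is a central coefficient times one of the bivectors `C ∧ D`,
`B ∧ C`, `A ∧ D`, `A ∧ B`. Among these, only the two complementary pairs have a nonzero product,
namely `A ∧ B ∧ C ∧ D`; any other two share a vector. In the square of `I₂` each complementary pair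
occurs in both orders, whence the factor `2`.
-/

section SquareZero

variable {L : Type*} [Ring L]

/-- A subgroup of a ring all of whose elements square to zero. It abstracts the degree-one part of
an exterior algebra; asking for a subgroup, rather than a set, makes its elements anticommute. -/
def IsSquareZero (V : AddSubgroup L) : Prop := ∀ x ∈ V, x * x = 0

namespace IsSquareZero

variable {V : AddSubgroup L} {x y z A B C D : L}

theorem mul_eq_neg_mul (hV : IsSquareZero V) (hx : x ∈ V) (hy : y ∈ V) : x * y = -(y * x) := by
  have polarized : (x + y) * (x + y) = 0 := hV _ (V.add_mem hx hy)
  simp only [add_mul, mul_add, hV x hx, hV y hy, zero_add, add_zero] at polarized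
  exact eq_neg_of_add_eq_zero_right polarized

theorem commute_mul (hV : IsSquareZero V) (hx : x ∈ V) (hy : y ∈ V) (hz : z ∈ V) :
    Commute (x * y) z :=
  calc x * y * z = -(x * z * y) := by rw [mul_assoc, hV.mul_eq_neg_mul hy hz, mul_neg, mul_assoc]
    _ = z * (x * y) := by rw [hV.mul_eq_neg_mul hx hz, neg_mul, neg_neg, mul_assoc]

theorem mul_mul_self_eq_zero (hV : IsSquareZero V) (hx : x ∈ V) (hy : y ∈ V) : x * y * x = 0 := by
  rw [hV.mul_eq_neg_mul hx hy, neg_mul, mul_assoc, hV x hx, mul_zero, neg_zero]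

theorem mul_mul_mul_eq_zero_of_left_left (hV : IsSquareZero V) (hx : x ∈ V) (hy : y ∈ V) (z : L) :
    x * y * (x * z) = 0 := by
  rw [← mul_assoc, hV.mul_mul_self_eq_zero hx hy, zero_mul]

theorem mul_mul_mul_eq_zero_of_right_right (hV : IsSquareZero V) (hy : y ∈ V) (hz : z ∈ V)
    (x : L) : x * y * (z * y) = 0 := by
  rw [mul_assoc, ← mul_assoc y, hV.mul_mul_self_eq_zero hy hz, mul_zero]

theorem mul_mul_mul_eq_zero_of_right_left (hV : IsSquareZero V) (hy : y ∈ V) (x z : L) :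
    x * y * (y * z) = 0 := by
  rw [mul_assoc, ← mul_assoc y, hV y hy, zero_mul, mul_zero]

theorem mul_mul_mul_eq_zero_of_left_right (hV : IsSquareZero V) (hx : x ∈ V) (hy : y ∈ V)
    (hz : z ∈ V) : x * y * (z * x) = 0 := by
  rw [← mul_assoc, (hV.commute_mul hx hy hz).eq, mul_assoc, hV.mul_mul_self_eq_zero hx hy, mul_zero]

theorem mul_mul_mul_swap (hV : IsSquareZero V) (hA : A ∈ V) (hB : B ∈ V) (hC : C ∈ V)
    (hD : D ∈ V) : C * D * (A * B) = A * B * C * D := by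
  rw [mul_assoc (A * B), ((hV.commute_mul hC hD hA).mul_right (hV.commute_mul hC hD hB)).eq]

theorem mul_mul_mul_rotate (hV : IsSquareZero V) (hA : A ∈ V) (hB : B ∈ V) (hC : C ∈ V) (D : L) :
    B * C * (A * D) = A * B * C * D := by
  rw [← mul_assoc, (hV.commute_mul hB hC hA).eq, ← mul_assoc A]

theorem mul_mul_mul_mul_eq_zero_of_mem (hV : IsSquareZero V) (hA : A ∈ V) (hB : B ∈ V) (hC : C ∈ V)
    (hD : D ∈ V) (hx : x ∈ ({A, B, C, D} : Set L)) : A * B * C * D * x = 0 := by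
  rw [mul_assoc (A * B)]
  rcases hx with rfl | rfl | rfl | rfl
  · rw [mul_assoc, (hV.commute_mul hC hD hA).eq, ← mul_assoc, hV.mul_mul_self_eq_zero hA hB,
      zero_mul]
  · rw [mul_assoc, (hV.commute_mul hC hD hB).eq, ← mul_assoc, mul_assoc A, hV _ hB, mul_zero,
      zero_mul]
  · rw [mul_assoc, hV.mul_mul_self_eq_zero hC hD, mul_zero]
  · rw [mul_assoc, mul_assoc C, hV _ hD, mul_zero, mul_zero]

theorem sum_smul_mul_self {Z : Type*} [CommRing Z] [Algebra Z L] (hV : IsSquareZero V)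
    (hA : A ∈ V) (hB : B ∈ V) (hC : C ∈ V) (hD : D ∈ V) (p q r s : Z) :
    (p • (C * D) + r • (B * C) + s • (A * D) + q • (A * B)) *
        (p • (C * D) + r • (B * C) + s • (A * D) + q • (A * B)) =
      2 • ((s * r + p * q) • (A * B * C * D)) := by
  have ab_cd : A * B * (C * D) = A * B * C * D := (mul_assoc _ _ _).symm
  have ad_bc : A * D * (B * C) = A * B * C * D := by
    rw [← ((hV.commute_mul hB hC hA).mul_right (hV.commute_mul hB hC hD)).eq,
      hV.mul_mul_mul_rotate hA hB hC D]
  simp only [add_mul, mul_add, smul_mul_smul_comm, hV.mul_mul_mul_swap hA hB hC hD,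
    hV.mul_mul_mul_rotate hA hB hC D, ab_cd, ad_bc,
    hV.mul_mul_mul_eq_zero_of_left_left hA hB, hV.mul_mul_mul_eq_zero_of_left_left hA hD,
    hV.mul_mul_mul_eq_zero_of_left_left hB hC, hV.mul_mul_mul_eq_zero_of_left_left hC hD,
    hV.mul_mul_mul_eq_zero_of_right_right hD hA, hV.mul_mul_mul_eq_zero_of_right_right hD hC,
    hV.mul_mul_mul_eq_zero_of_right_left hB, hV.mul_mul_mul_eq_zero_of_right_left hC,
    hV.mul_mul_mul_eq_zero_of_left_right hB hC hA, hV.mul_mul_mul_eq_zero_of_left_right hC hD hB,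
    smul_zero, add_zero, zero_add]
  module

end IsSquareZero

/-- Here `A, B, C, D` stand for the linear factors of `I₁`, and `p, q, r, s` for `Σ aᵢ ∧ bᵢ`,
`Σ cᵢ ∧ dᵢ`, `Σ aᵢ ∧ dᵢ`, `Σ bᵢ ∧ cᵢ`. -/
theorem stmt5_general {V : AddSubgroup L} (hV : IsSquareZero V) {A B C D p q r s : L}
    (hA : A ∈ V) (hB : B ∈ V) (hC : C ∈ V) (hD : D ∈ V)
    (hp : p ∈ Subring.center L) (hq : q ∈ Subring.center L)
    (hr : r ∈ Subring.center L) (hs : s ∈ Subring.center L) :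
    p * C * D * (A * B * q) = A * B * C * D * (p * q) ∧
    B * C * r * (A * s * D) = A * B * C * D * (s * r) ∧
    (p * C * D + B * C * r + A * s * D + A * B * q) *
        (p * C * D + B * C * r + A * s * D + A * B * q) =
      2 • (A * B * C * D * (s * r + p * q)) ∧
    (A * B * C * D * (A * B * C * D) = 0 ∧ A * B * C * D * (p * C * D) = 0 ∧
      A * B * C * D * (B * C * r) = 0 ∧ A * B * C * D * (A * s * D) = 0 ∧
      A * B * C * D * (A * B * q) = 0) := by
  lift p to Subring.center L using hp
  lift q to Subring.center L using hq
  lift r to Subring.center L using hr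
  lift s to Subring.center L using hs
  have mul_coe (x : L) (c : Subring.center L) : x * c = c • x := Subring.mem_center_iff.1 c.2 x
  have cd : p * C * D = p • (C * D) := mul_assoc _ _ _
  have bc : B * C * r = r • (B * C) := mul_coe _ _
  have ad : A * s * D = s • (A * D) := by rw [mul_coe, smul_mul_assoc]
  have ab : A * B * q = q • (A * B) := mul_coe _ _
  have top_mul {x : L} (hx : x ∈ ({A, B, C, D} : Set L)) (c : Subring.center L) (y : L) :
      A * B * C * D * (c • (x * y)) = 0 := by
    rw [mul_smul_comm, ← mul_assoc, hV.mul_mul_mul_mul_eq_zero_of_mem hA hB hC hD hx, zero_mul,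
      smul_zero]
  rw [cd, bc, ad, ab]
  refine ⟨?_, ?_, ?_, ?_, top_mul (by simp) p D, top_mul (by simp) r C, top_mul (by simp) s D,
    top_mul (by simp) q B⟩
  · rw [smul_mul_smul_comm, hV.mul_mul_mul_swap hA hB hC hD]
    exact (mul_coe _ (p * q)).symm
  · rw [smul_mul_smul_comm, hV.mul_mul_mul_rotate hA hB hC D, mul_comm r s]
    exact (mul_coe _ (s * r)).symm
  · rw [hV.sum_smul_mul_self hA hB hC hD]
    exact congrArg (2 • ·) (mul_coe _ (s * r + p * q)).symm
  · simpa only [mul_assoc, one_smul] using top_mul (x := A) (by simp) 1 (B * C * D)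

end SquareZero

section Exterior

variable {R M : Type*} [CommRing R] [AddCommGroup M] [Module R M]

theorem isSquareZero_range_ι :
    IsSquareZero (LinearMap.range (ExteriorAlgebra.ι R (M := M))).toAddSubgroup := by
  rintro _ ⟨x, rfl⟩
  exact ExteriorAlgebra.ι_sq_zero x

theorem ι_mul_ι_mem_center (x y : M) :
    ExteriorAlgebra.ι R x * ExteriorAlgebra.ι R y ∈ Subring.center (ExteriorAlgebra R M) := by
  refine Subring.mem_center_iff.2 fun z ↦ Commute.symm ?_
  induction z using ExteriorAlgebra.induction with
  | algebraMap r => exact Algebra.commute_algebraMap_right r _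
  | ι z => exact isSquareZero_range_ι.commute_mul ⟨x, rfl⟩ ⟨y, rfl⟩ ⟨z, rfl⟩
  | mul _ _ hz hw => exact hz.mul_right hw
  | add _ _ hz hw => exact hz.add_right hw

end Exterior

theorem sum_smul_eGen_mem_range_ι (m : ℕ) (t : Fin 4) (f : Fin m → PolyR m) :
    ∑ i, f i • eGen m t i ∈ LinearMap.range (ExteriorAlgebra.ι (PolyR m) (M := ModM m)) :=
  Submodule.sum_smul_mem _ _ fun _ _ ↦ ⟨_, rfl⟩

theorem sum_eGen_mul_eGen_mem_center (m : ℕ) (s t : Fin 4) :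
    ∑ i, eGen m s i * eGen m t i ∈ Subring.center (Lam m) :=
  sum_mem fun _ _ ↦ ι_mul_ι_mem_center _ _

/-- The identities `I₂₁ ∧ I₂₄ = I₁ ∧ I₃₂`, `I₂₂ ∧ I₂₃ = I₁ ∧ I₃₁`,
`I₂ ∧ I₂ = 2 (I₁ ∧ I₃)`, `I₁ ∧ I₁ = 0` and `I₁ ∧ I₂ⱼ = 0` for `j = 1,2,3,4`. -/
theorem stmt5 (m : ℕ) (hm : 1 ≤ m) :
    I21 m * I24 m = I1 m * I32 m ∧
    I22 m * I23 m = I1 m * I31 m ∧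
    I2 m * I2 m = 2 • (I1 m * I3 m) ∧
    (I1 m * I1 m = 0 ∧ I1 m * I21 m = 0 ∧ I1 m * I22 m = 0 ∧
      I1 m * I23 m = 0 ∧ I1 m * I24 m = 0) := by
  exact stmt5_general isSquareZero_range_ι
    (sum_smul_eGen_mem_range_ι m 0 _) (sum_smul_eGen_mem_range_ι m 1 _)
    (sum_smul_eGen_mem_range_ι m 2 _) (sum_smul_eGen_mem_range_ι m 3 _)
    (sum_eGen_mul_eGen_mem_center m 0 1) (sum_eGen_mul_eGen_mem_center m 2 3)
    (sum_eGen_mul_eGen_mem_center m 0 3) (sum_eGen_mul_eGen_mem_center m 1 2)
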